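/- Let κ > 0, S₀ > 0, r ∈ ℝ, τ > 0 and σ > 0. Then the function s ↦ (S₀/(τ s²))·e^{-rτ}·E[ (A_{s²τ} − s²κτ/S₀)^+ ] is differentiable at σ with derivative ν₀ = −(2/σ)·Call₀ + (2S₀/σ)·e^{-rτ}·P[ A_{σ²τ}^{(1)} > σ²κτ/S₀ ] − (2κ/σ)·e^{-rτ}·P[ A_{σ²τ} > σ²κτ/S₀ ], where Call₀ = (S₀/(τσ²))·e^{-rτ}·E[(A_{σ²τ} − σ²κτ/S₀)^+]. -/

import Mathlib

open MeasureTheory ProbabilityTheory Real Set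

noncomputable section

/-- A standard one-dimensional Brownian motion `B` (with `B 0 = 0`, continuous
paths, Gaussian increments and independent increments) on a probability space
with measure `P`. -/
structure IsBrownianMotion {Ω : Type*} [MeasurableSpace Ω]
    (P : Measure Ω) (B : ℝ → Ω → ℝ) : Prop where
  isProbabilityMeasure : IsProbabilityMeasure P
  measurable : ∀ t : ℝ, Measurable (B t)
  start : ∀ ω, B 0 ω = 0
  continuous_paths : ∀ ω, Continuous fun t => B t ω
  gaussian_increments : ∀ s t : ℝ, 0 ≤ s → s ≤ t →
    P.map (fun ω => B t ω - B s ω) = gaussianReal 0 (Real.toNNReal (t - s))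
  indep_increments : ∀ t : ℕ → ℝ, Monotone t → 0 ≤ t 0 →
    iIndepFun
      (fun (i : ℕ) (ω : Ω) => B (t (i + 1)) ω - B (t i) ω) P

/-- The exponential martingale `M_t = exp (B_t - t/2)`. -/
def M {Ω : Type*} (B : ℝ → Ω → ℝ) (t : ℝ) (ω : Ω) : ℝ :=
  Real.exp (B t ω - t / 2)

/-- The time integral `A_t = ∫_0^t exp (B_s - s/2) ds`. -/
def A {Ω : Type*} (B : ℝ → Ω → ℝ) (t : ℝ) (ω : Ω) : ℝ :=
  ∫ s in (0 : ℝ)..t, Real.exp (B s ω - s / 2)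

/-- The time integral with drift `ν`: `A_t^{(ν)} = ∫_0^t exp (B_s + (ν - 1/2) s) ds`. -/
def Adrift {Ω : Type*} (B : ℝ → Ω → ℝ) (ν t : ℝ) (ω : Ω) : ℝ :=
  ∫ s in (0 : ℝ)..t, Real.exp (B s ω + (ν - 1 / 2) * s)

variable {Ω : Type*} [MeasurableSpace Ω] (P : MeasureTheory.Measure Ω) (B : ℝ → Ω → ℝ)

/-!
Write the price as a constant times `s⁻² f (s² τ)`, where `f t = E[(A_t - c t)⁺]` and `c = κ / S₀`;
everything rests on differentiating `f`. The martingale `M` is continuous in `L¹` by Scheffé's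
lemma, so `t ↦ A_t` is differentiable in `L¹` with derivative `M_t`. As `x ↦ x⁺` is Lipschitz, and
differentiable off `0`, it follows that `f' t = E[(M_t - c) 1_{A_t > c t}]`, provided
`P[A_t = c t] = 0`.

Both remaining points come from Girsanov's theorem: under the measure with density proportional to
`exp (θ B_t)`, the variable `A_t` has the law of `A_t^{(θ)}` under `P`. At `θ = 1` the density is
`M_t`, which turns `E[M_t 1_{A_t > c t}]` into `P[A_t^{(1)} > c t]`. For general `θ`, an atom of
`A_t` at `k` would give every `A_t^{(θ)}` an atom at `k`, while the events `{A_t^{(θ)} = k}` are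
pairwise disjoint. Girsanov's theorem itself is obtained from Gaussian increments by passing to the
limit in Riemann sums.
-/

open Filter Topology Interval

section RiemannSums

variable {E : Type*} [NormedAddCommGroup E] [NormedSpace ℝ E] [CompleteSpace E]

theorem norm_sum_smul_sub_integral_le {g : ℝ → E} {t : ℕ → ℝ} (ht : Monotone t) {n : ℕ}
    (hg : ContinuousOn g (Icc (t 0) (t n))) {ε : ℝ}
    (hε : ∀ i < n, ∀ x ∈ Icc (t i) (t (i + 1)), ‖g (t i) - g x‖ ≤ ε) :
    ‖∑ i ∈ Finset.range n, (t (i + 1) - t i) • g (t i) - ∫ x in t 0..t n, g x‖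
      ≤ ε * (t n - t 0) := by
  have hint : ∀ i < n, IntervalIntegrable g volume (t i) (t (i + 1)) := fun i hi =>
    (hg.mono (Icc_subset_Icc (ht i.zero_le) (ht hi))).intervalIntegrable_of_Icc (ht i.le_succ)
  have hcell : ∀ i < n, ‖(t (i + 1) - t i) • g (t i) - ∫ x in t i..t (i + 1), g x‖
      ≤ ε * (t (i + 1) - t i) := fun i hi => by
    rw [← intervalIntegral.integral_const, ← intervalIntegral.integral_sub (by simp) (hint i hi),
      ← abs_of_nonneg (sub_nonneg.2 (ht i.le_succ))]
    refine intervalIntegral.norm_integral_le_of_norm_le_const fun x hx => hε i hi x ?_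
    rw [uIoc_of_le (ht i.le_succ)] at hx
    exact Ioc_subset_Icc_self hx
  rw [← intervalIntegral.sum_integral_adjacent_intervals hint, ← Finset.sum_sub_distrib,
    ← Finset.sum_range_sub, Finset.mul_sum]
  exact norm_sum_le_of_le _ fun i hi => hcell i (Finset.mem_range.1 hi)

/-- The `i`-th point of the partition of `[a, b]` into `n` intervals of equal length. It is defined
for every `i : ℕ`, and leaves `[a, b]` when `n < i`. -/
def uniformPartition (a b : ℝ) (n i : ℕ) : ℝ := a + i * ((b - a) / n)

lemma uniformPartition_zero (a b : ℝ) (n : ℕ) : uniformPartition a b n 0 = a := by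
  simp [uniformPartition]

lemma uniformPartition_self (a b : ℝ) {n : ℕ} (hn : n ≠ 0) : uniformPartition a b n n = b := by
  rw [uniformPartition, mul_div_cancel₀ _ (Nat.cast_ne_zero.2 hn), add_sub_cancel]

lemma uniformPartition_succ_sub (a b : ℝ) (n i : ℕ) :
    uniformPartition a b n (i + 1) - uniformPartition a b n i = (b - a) / n := by
  simp only [uniformPartition, Nat.cast_succ]
  ring

lemma monotone_uniformPartition {a b : ℝ} (hab : a ≤ b) (n : ℕ) :
    Monotone (uniformPartition a b n) :=
  monotone_nat_of_le_succ fun i => by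
    rw [← sub_nonneg, uniformPartition_succ_sub]
    exact div_nonneg (sub_nonneg.2 hab) n.cast_nonneg

theorem tendsto_riemannSum_uniformPartition {g : ℝ → E} {a b : ℝ} (hab : a ≤ b)
    (hg : ContinuousOn g (Icc a b)) :
    Tendsto (fun n : ℕ => ∑ i ∈ Finset.range n,
        (uniformPartition a b n (i + 1) - uniformPartition a b n i) • g (uniformPartition a b n i))
      atTop (𝓝 (∫ x in a..b, g x)) := by
  rw [Metric.tendsto_nhds]
  intro ε hε
  obtain ⟨η, hη, hηε⟩ := exists_pos_mul_lt hε (b - a)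
  obtain ⟨δ, hδ, hgδ⟩ := Metric.uniformContinuousOn_iff.1
    (isCompact_Icc.uniformContinuousOn_of_continuous hg) η hη
  have hmesh : ∀ᶠ n : ℕ in atTop, (b - a) / n < δ :=
    (tendsto_const_div_atTop_nhds_zero_nat (b - a)).eventually_lt_const hδ
  filter_upwards [hmesh, eventually_ne_atTop 0] with n hnδ hn
  set t := uniformPartition a b n
  have hmono : Monotone t := monotone_uniformPartition hab n
  have h0 : t 0 = a := uniformPartition_zero a b n
  have hend : t n = b := uniformPartition_self a b hn
  have hosc : ∀ i < n, ∀ x ∈ Icc (t i) (t (i + 1)), ‖g (t i) - g x‖ ≤ η := by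
    intro i hi x hx
    have hai : a ≤ t i := h0 ▸ hmono i.zero_le
    have hib : t (i + 1) ≤ b := hend ▸ hmono hi
    have hstep : t (i + 1) - t i = (b - a) / n := uniformPartition_succ_sub a b n i
    rw [← dist_eq_norm]
    refine (hgδ _ ⟨hai, (hx.1.trans hx.2).trans hib⟩ _ ⟨hai.trans hx.1, hx.2.trans hib⟩ ?_).le
    rw [dist_comm, Real.dist_eq, abs_of_nonneg (sub_nonneg.2 hx.1)]
    linarith [hx.2]
  have hle := norm_sum_smul_sub_integral_le hmono (by rwa [h0, hend]) hosc
  rw [h0, hend] at hle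
  rw [dist_eq_norm]
  exact hle.trans_lt (mul_comm η _ ▸ hηε)

end RiemannSums

section IdentDistrib

variable {α β : Type*} [MeasurableSpace α] [MeasurableSpace β] {μ : Measure α} {ν : Measure β}
  [IsFiniteMeasure μ] [IsFiniteMeasure ν]

lemma tendsto_integral_boundedContinuous_comp {E : Type*} [TopologicalSpace E] [MeasurableSpace E]
    [OpensMeasurableSpace E] {X : ℕ → α → E} {X' : α → E} (hX : ∀ n, AEMeasurable (X n) μ)
    (hlim : ∀ᵐ ω ∂μ, Tendsto (X · ω) atTop (𝓝 (X' ω))) (f : BoundedContinuousFunction E ℝ) :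
    Tendsto (fun n => ∫ ω, f (X n ω) ∂μ) atTop (𝓝 (∫ ω, f (X' ω) ∂μ)) :=
  tendsto_integral_of_dominated_convergence (fun _ => ‖f‖)
    (fun n => (f.continuous.measurable.comp_aemeasurable (hX n)).aestronglyMeasurable)
    (integrable_const _) (fun _ => ae_of_all _ fun _ => f.norm_coe_le_norm _)
    (hlim.mono fun _ hω => (f.continuous.tendsto _).comp hω)

theorem identDistrib_of_tendsto_ae {E : Type*} [TopologicalSpace E]
    [TopologicalSpace.PseudoMetrizableSpace E] [MeasurableSpace E] [BorelSpace E]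
    {X : ℕ → α → E} {Y : ℕ → β → E} {X' : α → E} {Y' : β → E}
    (h : ∀ n, IdentDistrib (X n) (Y n) μ ν)
    (hX : ∀ᵐ ω ∂μ, Tendsto (X · ω) atTop (𝓝 (X' ω)))
    (hY : ∀ᵐ ω ∂ν, Tendsto (Y · ω) atTop (𝓝 (Y' ω))) :
    IdentDistrib X' Y' μ ν := by
  have hX' := aemeasurable_of_tendsto_metrizable_ae _ (fun n => (h n).aemeasurable_fst) hX
  have hY' := aemeasurable_of_tendsto_metrizable_ae _ (fun n => (h n).aemeasurable_snd) hY
  refine ⟨hX', hY', ext_of_forall_integral_eq_of_IsFiniteMeasure fun f => ?_⟩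
  have hf : Measurable f := f.continuous.measurable
  rw [integral_map hX' hf.aestronglyMeasurable, integral_map hY' hf.aestronglyMeasurable]
  refine tendsto_nhds_unique
    (tendsto_integral_boundedContinuous_comp (fun n => (h n).aemeasurable_fst) hX f)
    ((tendsto_integral_boundedContinuous_comp (fun n => (h n).aemeasurable_snd) hY f).congr
      fun n => ?_)
  exact ((h n).comp hf).integral_eq.symm

theorem identDistrib_intervalIntegral {E : Type*} [NormedAddCommGroup E] [NormedSpace ℝ E]
    [CompleteSpace E] [SecondCountableTopology E] [MeasurableSpace E] [BorelSpace E]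
    {X : ℝ → α → E} {Y : ℝ → β → E} {a b : ℝ} (hab : a ≤ b)
    (hX : ∀ ω, ContinuousOn (X · ω) (Icc a b)) (hY : ∀ ω, ContinuousOn (Y · ω) (Icc a b))
    (h : ∀ (n : ℕ) (t : ℕ → ℝ), Monotone t → t 0 = a → t n = b →
      IdentDistrib (fun ω (i : Fin n) => X (t i) ω) (fun ω (i : Fin n) => Y (t i) ω) μ ν) :
    IdentDistrib (fun ω => ∫ s in a..b, X s ω) (fun ω => ∫ s in a..b, Y s ω) μ ν := by
  refine identDistrib_of_tendsto_ae (fun n => ?_)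
    (ae_of_all _ fun ω => (tendsto_riemannSum_uniformPartition hab (hX ω)).comp
      (tendsto_add_atTop_nat 1))
    (ae_of_all _ fun ω => (tendsto_riemannSum_uniformPartition hab (hY ω)).comp
      (tendsto_add_atTop_nat 1))
  have hskel := h (n + 1) (uniformPartition a b (n + 1)) (monotone_uniformPartition hab _)
    (uniformPartition_zero a b _) (uniformPartition_self a b n.succ_ne_zero)
  have hsum : Measurable fun x : Fin (n + 1) → E => ∑ i : Fin (n + 1),
      (uniformPartition a b (n + 1) (i + 1) - uniformPartition a b (n + 1) i) • x i := by
    fun_prop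
  simpa only [Function.comp_def, Finset.sum_range] using hskel.comp hsum

end IdentDistrib

section Tilting

lemma map_tilted_comp {α β : Type*} [MeasurableSpace α] [MeasurableSpace β] {μ : Measure α}
    {φ : α → β} (hφ : Measurable φ) {f : β → ℝ} (hf : Measurable f) :
    (μ.tilted (f ∘ φ)).map φ = (μ.map φ).tilted f := by
  ext s hs
  have : Measurable fun y => rexp (f y) := hf.exp
  rw [Measure.map_apply hφ hs, tilted_apply_eq_ofReal_integral' _ hs,
    tilted_apply_eq_ofReal_integral' _ (hφ hs), integral_map hφ.aemeasurable (by fun_prop),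
    setIntegral_map hs (by fun_prop) hφ.aemeasurable]
  rfl

lemma pi_tilted_sum {ι : Type*} [Fintype ι] {α : ι → Type*} [∀ i, MeasurableSpace (α i)]
    (μ : ∀ i, Measure (α i)) [∀ i, SigmaFinite (μ i)] (f : ∀ i, α i → ℝ) :
    (Measure.pi μ).tilted (fun x => ∑ i, f i (x i)) = Measure.pi fun i => (μ i).tilted (f i) := by
  refine (Measure.pi_eq fun s _ => ?_).symm
  simp only [tilted_apply_eq_ofReal_integral, Measure.restrict_pi_pi, integral_div, Real.exp_sum]
  rw [integral_fintype_prod_eq_prod fun i x => rexp (f i x),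
    integral_fintype_prod_eq_prod fun i x => rexp (f i x), ← Finset.prod_div_distrib,
    ENNReal.ofReal_prod_of_nonneg fun i _ => by positivity]

lemma gaussianReal_tilted (m : ℝ) (v : NNReal) (θ : ℝ) :
    (gaussianReal m v).tilted (fun x => θ * x) = gaussianReal (m + θ * v) v := by
  have := isProbabilityMeasure_tilted (integrable_exp_mul_gaussianReal (μ := m) (v := v) θ)
  refine Measure.ext_of_complexMGF_id_eq (funext fun z => ?_)
  have hmgf : ∫ x, rexp (θ * x) ∂gaussianReal m v = rexp (m * θ + v * θ ^ 2 / 2) :=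
    mgf_gaussianReal Measure.map_id θ
  have hshift : ∀ x : ℝ,
      (rexp (θ * x) / rexp (m * θ + v * θ ^ 2 / 2)) • Complex.exp (z * (id x : ℝ))
        = Complex.exp (-(m * θ + v * θ ^ 2 / 2)) * Complex.exp ((z + θ) * (id x : ℝ)) := by
    intro x
    rw [Complex.real_smul, ← Real.exp_sub]
    push_cast
    rw [← Complex.exp_add, ← Complex.exp_add]
    congr 1
    simp only [id]
    ring
  rw [complexMGF, integral_tilted, hmgf]
  simp_rw [hshift]
  rw [integral_const_mul, ← complexMGF, complexMGF_id_gaussianReal, complexMGF_id_gaussianReal,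
    ← Complex.exp_add]
  congr 1
  push_cast
  ring

theorem pi_gaussianReal_tilted {ι : Type*} [Fintype ι] (m : ι → ℝ) (v : ι → NNReal) (θ : ι → ℝ) :
    (Measure.pi fun i => gaussianReal (m i) (v i)).tilted (fun x => ∑ i, θ i * x i)
      = (Measure.pi fun i => gaussianReal (m i) (v i)).map fun x i => x i + θ i * v i := by
  rw [pi_tilted_sum _ fun i x => θ i * x,
    Measure.pi_map_pi (f := fun i x => x + θ i * v i) fun i => by fun_prop]
  simp only [gaussianReal_tilted, gaussianReal_map_add_const]

end Tilting

lemma exists_measure_fiber_eq_zero {ι α β : Type*} [Uncountable ι] [MeasurableSpace α]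
    [MeasurableSpace β] [MeasurableSingletonClass β] {μ : Measure α} [SFinite μ] {Y : ι → α → β}
    (hY : ∀ i, Measurable (Y i)) (hinj : ∀ ω, Function.Injective (Y · ω)) (k : β) :
    ∃ i, μ {ω | Y i ω = k} = 0 := by
  have hcount := Measure.countable_meas_pos_of_disjoint_iUnion (μ := μ)
    (As := fun i => {ω | Y i ω = k}) (fun i => hY i (measurableSet_singleton k))
    fun i j hij => Set.disjoint_left.2 fun ω hi hj => hij (hinj ω (hi.trans hj.symm))
  by_contra! hne
  exact not_countable_univ (hcount.mono fun i _ => pos_iff_ne_zero.2 (hne i))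

section MeanCalculus

variable {α : Type*} [MeasurableSpace α] {μ : Measure α}
  {E : Type*} [NormedAddCommGroup E]

lemma integrable_uncurry_of_integral_norm_le [SFinite μ] {u : ℝ → α → E}
    (hu : StronglyMeasurable (Function.uncurry u)) {a b C : ℝ}
    (hint : ∀ s ∈ Ι a b, Integrable (u s) μ) (hC : ∀ s ∈ Ι a b, ∫ ω, ‖u s ω‖ ∂μ ≤ C) :
    Integrable (Function.uncurry u) ((volume.restrict (Ι a b)).prod μ) := by
  have : IsFiniteMeasure (volume.restrict (Ι a b)) := isFiniteMeasure_restrict_Ioc _ _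
  rw [integrable_prod_iff hu.aestronglyMeasurable]
  refine ⟨ae_restrict_of_forall_mem measurableSet_uIoc hint, Integrable.of_bound
    hu.norm.integral_prod_right.aestronglyMeasurable C
    (ae_restrict_of_forall_mem measurableSet_uIoc fun s hs => ?_)⟩
  rw [Real.norm_of_nonneg (integral_nonneg fun _ => norm_nonneg _)]
  exact hC s hs

variable [NormedSpace ℝ E]

lemma stronglyMeasurable_intervalIntegral {u : ℝ → α → E}
    (hu : StronglyMeasurable (Function.uncurry u)) (a b : ℝ) :
    StronglyMeasurable fun ω => ∫ s in a..b, u s ω := by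
  simp_rw [intervalIntegral.intervalIntegral_eq_integral_uIoc]
  exact (hu.comp_measurable measurable_swap).integral_prod_right'.const_smul _

lemma integrable_intervalIntegral_of_integral_norm_le [SFinite μ] {u : ℝ → α → E}
    (hu : StronglyMeasurable (Function.uncurry u)) {a b C : ℝ}
    (hint : ∀ s ∈ Ι a b, Integrable (u s) μ) (hC : ∀ s ∈ Ι a b, ∫ ω, ‖u s ω‖ ∂μ ≤ C) :
    Integrable (fun ω => ∫ s in a..b, u s ω) μ := by
  simp_rw [intervalIntegral.intervalIntegral_eq_integral_uIoc]
  exact (integrable_uncurry_of_integral_norm_le hu hint hC).integral_prod_right.smul _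

theorem integral_norm_intervalIntegral_le [SFinite μ] {u : ℝ → α → E}
    (hu : StronglyMeasurable (Function.uncurry u)) {a b C : ℝ}
    (hint : ∀ s ∈ Ι a b, Integrable (u s) μ) (hC : ∀ s ∈ Ι a b, ∫ ω, ‖u s ω‖ ∂μ ≤ C) :
    ∫ ω, ‖∫ s in a..b, u s ω‖ ∂μ ≤ C * |b - a| := by
  have hprod := integrable_uncurry_of_integral_norm_le hu hint hC
  calc ∫ ω, ‖∫ s in a..b, u s ω‖ ∂μ
      ≤ ∫ ω, (∫ s in Ι a b, ‖u s ω‖) ∂μ :=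
        integral_mono (integrable_intervalIntegral_of_integral_norm_le hu hint hC).norm
          hprod.norm.integral_prod_right fun _ =>
            intervalIntegral.norm_integral_le_integral_norm_uIoc
    _ = ∫ s in Ι a b, ∫ ω, ‖u s ω‖ ∂μ := (integral_integral_swap hprod.norm).symm
    _ ≤ ‖∫ s in Ι a b, ∫ ω, ‖u s ω‖ ∂μ‖ := Real.le_norm_self _
    _ ≤ C * volume.real (Ι a b) :=
        norm_setIntegral_le_of_norm_le_const (by simp [Real.volume_uIoc]) fun s hs => by
          rw [Real.norm_of_nonneg (integral_nonneg fun _ => norm_nonneg _)]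
          exact hC s hs
    _ = C * |b - a| := by rw [Measure.real, Real.volume_uIoc, ENNReal.toReal_ofReal (abs_nonneg _)]

-- Scheffé's lemma, from `|x - y| = (x - y) + 2 (y - x)⁺` and dominated convergence of `(g - f i)⁺`.
theorem tendsto_integral_abs_sub_of_tendsto_integral {ι : Type*} {l : Filter ι}
    [l.IsCountablyGenerated] {f : ι → α → ℝ} {g : α → ℝ}
    (hf : ∀ᶠ i in l, Integrable (f i) μ) (hf_nonneg : ∀ᶠ i in l, 0 ≤ᵐ[μ] f i)
    (hg : Integrable g μ) (hlim : ∀ᵐ ω ∂μ, Tendsto (f · ω) l (𝓝 (g ω)))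
    (hint : Tendsto (fun i => ∫ ω, f i ω ∂μ) l (𝓝 (∫ ω, g ω ∂μ))) :
    Tendsto (fun i => ∫ ω, |f i ω - g ω| ∂μ) l (𝓝 0) := by
  have hpos : Tendsto (fun i => ∫ ω, max (g ω - f i ω) 0 ∂μ) l (𝓝 (∫ _, 0 ∂μ)) := by
    refine tendsto_integral_filter_of_dominated_convergence (fun ω => |g ω|)
      (hf.mono fun i hi => (hg.sub hi).pos_part.aestronglyMeasurable)
      (hf_nonneg.mono fun i hi => hi.mono fun ω hω => ?_) hg.abs (hlim.mono fun ω hω => ?_)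
    · rw [Real.norm_of_nonneg (le_max_right _ _)]
      exact max_le ((sub_le_self _ hω).trans (le_abs_self _)) (abs_nonneg _)
    · simpa using (hω.const_sub (g ω)).max (tendsto_const_nhds (x := (0 : ℝ)))
  have hdecomp : ∀ x y : ℝ, |x - y| = (x - y) + 2 * max (y - x) 0 := fun x y => by
    rcases le_total x y with h | h
    · rw [abs_of_nonpos (sub_nonpos.2 h), max_eq_left (sub_nonneg.2 h)]
      ring
    · rw [abs_of_nonneg (sub_nonneg.2 h), max_eq_right (sub_nonpos.2 h)]
      ring
  have hsum : Tendsto (fun i => (∫ ω, f i ω ∂μ - ∫ ω, g ω ∂μ) + 2 * ∫ ω, max (g ω - f i ω) 0 ∂μ)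
      l (𝓝 0) := by
    simpa using (hint.sub_const (∫ ω, g ω ∂μ)).add (hpos.const_mul 2)
  refine hsum.congr' (hf.mono fun i hi => ?_)
  have hdiff : Integrable (fun ω => f i ω - g ω) μ := hi.sub hg
  have hposi : Integrable (fun ω => 2 * max (g ω - f i ω) 0) μ := (hg.sub hi).pos_part.const_mul 2
  simp_rw [hdecomp]
  rw [integral_add hdiff hposi, integral_const_mul, integral_sub hi hg]

theorem isLittleO_integral_norm_intervalIntegral_sub [CompleteSpace E] [SFinite μ] {u : ℝ → α → E}
    (hu : ∀ s, StronglyMeasurable (u s)) (hcont : ∀ ω, Continuous (u · ω)) {T : ℝ}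
    (hint : ∀ᶠ s in 𝓝 T, Integrable (u s) μ)
    (hL1 : Tendsto (fun s => ∫ ω, ‖u s ω - u T ω‖ ∂μ) (𝓝 T) (𝓝 0)) :
    (fun x => ∫ ω, ‖(∫ s in T..x, u s ω) - (x - T) • u T ω‖ ∂μ) =o[𝓝 T] fun x => x - T := by
  refine Asymptotics.isLittleO_iff.2 fun ε hε => ?_
  have hnear : ∀ᶠ s in 𝓝 T, Integrable (u s) μ ∧ ∫ ω, ‖u s ω - u T ω‖ ∂μ ≤ ε :=
    hint.and (hL1.eventually_le_const hε)
  obtain ⟨δ, hδ, hball⟩ := Metric.eventually_nhds_iff_ball.1 hnear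
  filter_upwards [Metric.ball_mem_nhds T hδ] with x hx
  have hsub : Ι T x ⊆ Metric.ball T δ := uIoc_subset_uIcc.trans
    ((convex_ball T δ).ordConnected.uIcc_subset (Metric.mem_ball_self hδ) hx)
  have hmeas : StronglyMeasurable (Function.uncurry fun s ω => u s ω - u T ω) :=
    stronglyMeasurable_uncurry_of_continuous_of_stronglyMeasurable
      (fun ω => (hcont ω).sub continuous_const) fun s => (hu s).sub (hu T)
  have hmean : ∀ ω, ∫ s in T..x, (u s ω - u T ω) = (∫ s in T..x, u s ω) - (x - T) • u T ω :=
    fun ω => by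
      rw [intervalIntegral.integral_sub ((hcont ω).intervalIntegrable _ _) (by simp),
        intervalIntegral.integral_const]
  rw [Real.norm_of_nonneg (integral_nonneg fun _ => norm_nonneg _), Real.norm_eq_abs]
  simp_rw [← hmean]
  exact integral_norm_intervalIntegral_le hmeas
    (fun s hs => (hball s (hsub hs)).1.sub hint.self_of_nhds) fun s hs => (hball s (hsub hs)).2

lemma hasDerivAt_posPart_affine {a : ℝ} (ha : a ≠ 0) (m T : ℝ) :
    HasDerivAt (fun x => max (a + (x - T) * m) 0) ((Ioi 0).indicator (fun _ => m) a) T := by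
  have haff : HasDerivAt (fun x => a + (x - T) * m) m T := by
    simpa using (((hasDerivAt_id T).sub_const T).mul_const m).const_add a
  have htend : Tendsto (fun x => a + (x - T) * m) (𝓝 T) (𝓝 a) := by
    simpa using haff.continuousAt.tendsto
  rcases ha.lt_or_gt with hneg | hpos
  · rw [indicator_of_notMem (notMem_Ioi.2 hneg.le)]
    exact (hasDerivAt_const T (0 : ℝ)).congr_of_eventuallyEq
      ((htend.eventually_le_const hneg).mono fun x hx => max_eq_right hx)
  · rw [indicator_of_mem (mem_Ioi.2 hpos)]
    exact haff.congr_of_eventuallyEq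
      ((htend.eventually_const_le hpos).mono fun x hx => max_eq_left hx)

lemma hasDerivAt_integral_posPart_affine {X D : α → ℝ} (hX : Integrable X μ) (hD : Integrable D μ)
    (hX0 : ∀ᵐ ω ∂μ, X ω ≠ 0) (T : ℝ) :
    HasDerivAt (fun x => ∫ ω, max (X ω + (x - T) * D ω) 0 ∂μ) (∫ ω in {ω | 0 < X ω}, D ω ∂μ) T := by
  have hset : NullMeasurableSet {ω | 0 < X ω} μ :=
    nullMeasurableSet_lt aemeasurable_const hX.aemeasurable
  have haff : ∀ x, Integrable (fun ω => max (X ω + (x - T) * D ω) 0) μ := fun x =>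
    (hX.add (hD.const_mul _)).pos_part
  rw [← integral_indicator₀ hset]
  refine (hasDerivAt_integral_of_dominated_loc_of_lip (s := univ) (bound := fun ω => |D ω|)
    univ_mem (.of_forall fun x => (haff x).aestronglyMeasurable) (haff T)
    (hD.aestronglyMeasurable.indicator₀ hset) (.of_forall fun ω => ?_) hD.abs
    (hX0.mono fun ω hω => hasDerivAt_posPart_affine hω (D ω) T)).2
  refine LipschitzOnWith.of_dist_le_mul fun x _ y _ => ?_
  calc |max (X ω + (x - T) * D ω) 0 - max (X ω + (y - T) * D ω) 0|
      ≤ |X ω + (x - T) * D ω - (X ω + (y - T) * D ω)| := abs_max_sub_max_le_abs _ _ _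
    _ = |D ω * (x - y)| := by ring_nf
    _ = Real.nnabs |D ω| * dist x y := by simp [abs_mul, Real.dist_eq]

theorem hasDerivAt_integral_posPart {X : ℝ → α → ℝ} {D : α → ℝ} {T : ℝ}
    (hX : ∀ᶠ x in 𝓝 T, Integrable (X x) μ) (hD : Integrable D μ)
    (hXD : (fun x => ∫ ω, |X x ω - X T ω - (x - T) * D ω| ∂μ) =o[𝓝 T] fun x => x - T)
    (hX0 : ∀ᵐ ω ∂μ, X T ω ≠ 0) :
    HasDerivAt (fun x => ∫ ω, max (X x ω) 0 ∂μ) (∫ ω in {ω | 0 < X T ω}, D ω ∂μ) T := by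
  have hXT := hX.self_of_nhds
  have haff := hasDerivAt_integral_posPart_affine hXT hD hX0 T
  rw [hasDerivAt_iff_isLittleO] at haff ⊢
  have hrem : (fun x => ∫ ω, max (X x ω) 0 ∂μ - ∫ ω, max (X T ω + (x - T) * D ω) 0 ∂μ)
      =o[𝓝 T] fun x => x - T := by
    refine Asymptotics.IsBigO.trans_isLittleO (.of_norm_eventuallyLE (hX.mono fun x hx => ?_)) hXD
    have haffx : Integrable (fun ω => X T ω + (x - T) * D ω) μ := hXT.add (hD.const_mul _)
    have hdiff : Integrable (fun ω => X x ω - X T ω - (x - T) * D ω) μ :=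
      (hx.sub hXT).sub (hD.const_mul _)
    dsimp only
    rw [← integral_sub hx.pos_part haffx.pos_part]
    refine norm_integral_le_of_norm_le hdiff.abs (.of_forall fun ω => ?_)
    rw [sub_sub]
    exact abs_max_sub_max_le_abs _ _ _
  refine (hrem.add haff).congr_left fun x => ?_
  simp only [sub_self, zero_mul, add_zero]
  ring

end MeanCalculus

lemma A_eq_Adrift_zero {Ω : Type*} (B : ℝ → Ω → ℝ) (t : ℝ) : A B t = Adrift B 0 t := by
  ext ω
  simp only [A, Adrift]
  ring_nf

namespace IsBrownianMotion

variable {P B}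

section Girsanov

lemma map_increments (hB : IsBrownianMotion P B) {t : ℕ → ℝ} (ht : Monotone t) (ht0 : 0 ≤ t 0)
    (n : ℕ) :
    P.map (fun ω (i : Fin n) => B (t (i + 1)) ω - B (t i) ω)
      = Measure.pi fun i : Fin n => gaussianReal 0 (t (i + 1) - t i).toNNReal := by
  have := hB.isProbabilityMeasure
  have := hB.measurable
  have hindep := (hB.indep_increments t ht ht0).precomp (Fin.val_injective (n := n))
  rw [(iIndepFun_iff_map_fun_eq_pi_map fun i => by fun_prop).1 hindep]
  exact congrArg _ (funext fun i =>
    hB.gaussian_increments _ _ (ht0.trans (ht (Nat.zero_le _))) (ht (Nat.le_succ _)))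

-- `θ B_{t n}` is a linear functional of the increments, so tilting by it shifts each Gaussian
-- increment by `θ` times its variance.
lemma identDistrib_increments (hB : IsBrownianMotion P B) {t : ℕ → ℝ} (ht : Monotone t)
    (ht0 : t 0 = 0) (n : ℕ) (θ : ℝ) :
    IdentDistrib (fun ω (i : Fin n) => B (t (i + 1)) ω - B (t i) ω)
      (fun ω (i : Fin n) => B (t (i + 1)) ω - B (t i) ω + θ * (t (i + 1) - t i))
      (P.tilted fun ω => θ * B (t n) ω) P := by
  have := hB.measurable
  have hX : Measurable fun ω (i : Fin n) => B (t (i + 1)) ω - B (t i) ω := by fun_prop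
  have hsum : (fun ω => θ * B (t n) ω)
      = (fun x => ∑ i : Fin n, θ * x i) ∘ fun ω (i : Fin n) => B (t (i + 1)) ω - B (t i) ω := by
    ext ω
    simp only [Function.comp_apply, ← Finset.mul_sum]
    rw [Fin.sum_univ_eq_sum_range fun i => B (t (i + 1)) ω - B (t i) ω,
      Finset.sum_range_sub fun i => B (t i) ω, ht0, hB.start, sub_zero]
  have hvar : ∀ i : Fin n, ((t (i + 1) - t i).toNNReal : ℝ) = t (i + 1) - t i := fun i =>
    Real.coe_toNNReal _ (sub_nonneg.2 (ht (Nat.le_succ _)))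
  refine ⟨by fun_prop, by fun_prop, ?_⟩
  rw [hsum, map_tilted_comp hX (by fun_prop), hB.map_increments ht ht0.ge,
    pi_gaussianReal_tilted _ _ fun _ => θ, ← hB.map_increments ht ht0.ge,
    Measure.map_map (by fun_prop) hX]
  simp only [hvar, Function.comp_def]

lemma identDistrib_skeleton (hB : IsBrownianMotion P B) {t : ℕ → ℝ} (ht : Monotone t)
    (ht0 : t 0 = 0) (n : ℕ) (θ : ℝ) :
    IdentDistrib (fun ω (i : Fin n) => B (t i) ω) (fun ω (i : Fin n) => B (t i) ω + θ * t i)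
      (P.tilted fun ω => θ * B (t n) ω) P := by
  have hprefix : Measurable fun (x : Fin n → ℝ) (i : Fin n) =>
      ∑ j : Fin i, x (j.castLE i.isLt.le) := by fun_prop
  have htele : ∀ (g : ℕ → ℝ) (i : ℕ), ∑ j : Fin i, (g (j + 1) - g j) = g i - g 0 := fun g i => by
    rw [Fin.sum_univ_eq_sum_range fun j => g (j + 1) - g j, Finset.sum_range_sub]
  convert (hB.identDistrib_increments ht ht0 n θ).comp hprefix using 1
  · ext ω i
    simp [htele fun j => B (t j) ω, ht0, hB.start]
  · ext ω i
    simp [Finset.sum_add_distrib, ← Finset.mul_sum, htele fun j => B (t j) ω, htele t, ht0,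
      hB.start]

theorem identDistrib_Adrift (hB : IsBrownianMotion P B) (ν θ : ℝ) {T : ℝ} (hT : 0 ≤ T) :
    IdentDistrib (Adrift B ν T) (Adrift B (ν + θ) T) (P.tilted fun ω => θ * B T ω) P := by
  have := hB.isProbabilityMeasure
  have := hB.continuous_paths
  refine identDistrib_intervalIntegral hT (fun ω => by fun_prop) (fun ω => by fun_prop)
    fun n t ht ht0 htn => ?_
  have hexp : Measurable fun (x : Fin n → ℝ) i => rexp (x i + (ν - 1 / 2) * t i) := by fun_prop
  convert (hB.identDistrib_skeleton ht ht0 n θ).comp hexp using 1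
  · rfl
  · ext ω i
    simp only [Function.comp_apply]
    ring_nf
  · rw [htn]

end Girsanov

lemma map_eq_gaussianReal (hB : IsBrownianMotion P B) {t : ℝ} (ht : 0 ≤ t) :
    P.map (B t) = gaussianReal 0 t.toNNReal := by
  simpa [hB.start] using hB.gaussian_increments 0 t le_rfl ht

lemma integrable_exp_mul (hB : IsBrownianMotion P B) (θ : ℝ) {t : ℝ} (ht : 0 ≤ t) :
    Integrable (fun ω => rexp (θ * B t ω)) P := by
  refine Integrable.comp_measurable (f := B t) (g := fun x => rexp (θ * x)) ?_ (hB.measurable t)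
  rw [hB.map_eq_gaussianReal ht]
  exact integrable_exp_mul_gaussianReal θ

lemma integral_exp_mul (hB : IsBrownianMotion P B) (θ : ℝ) {t : ℝ} (ht : 0 ≤ t) :
    ∫ ω, rexp (θ * B t ω) ∂P = rexp (t * θ ^ 2 / 2) := by
  have hmgf := mgf_gaussianReal (hB.map_eq_gaussianReal ht) θ
  rwa [zero_mul, zero_add, Real.coe_toNNReal t ht] at hmgf

section ExponentialMartingale

lemma measurable_M (hB : IsBrownianMotion P B) (t : ℝ) : Measurable (M B t) :=
  ((hB.measurable t).sub_const _).exp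

lemma continuous_M (hB : IsBrownianMotion P B) (ω : Ω) : Continuous (M B · ω) := by
  have := hB.continuous_paths
  unfold M
  fun_prop

lemma stronglyMeasurable_uncurry_M (hB : IsBrownianMotion P B) :
    StronglyMeasurable (Function.uncurry (M B)) :=
  stronglyMeasurable_uncurry_of_continuous_of_stronglyMeasurable hB.continuous_M
    fun t => (hB.measurable_M t).stronglyMeasurable

-- The factor `1` makes the right-hand side the density of the tilted measure at `θ = 1`.
lemma M_eq_exp_div_integral (hB : IsBrownianMotion P B) {t : ℝ} (ht : 0 ≤ t) (ω : Ω) :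
    M B t ω = rexp (1 * B t ω) / ∫ ω', rexp (1 * B t ω') ∂P := by
  rw [hB.integral_exp_mul 1 ht, ← Real.exp_sub, M]
  ring_nf

lemma integrable_M (hB : IsBrownianMotion P B) {t : ℝ} (ht : 0 ≤ t) : Integrable (M B t) P :=
  ((hB.integrable_exp_mul 1 ht).div_const _).congr
    (ae_of_all _ fun ω => (hB.M_eq_exp_div_integral ht ω).symm)

lemma integral_M (hB : IsBrownianMotion P B) {t : ℝ} (ht : 0 ≤ t) : ∫ ω, M B t ω ∂P = 1 := by
  simp_rw [hB.M_eq_exp_div_integral ht, integral_div]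
  rw [hB.integral_exp_mul 1 ht, div_self (Real.exp_ne_zero _)]

theorem tendsto_integral_abs_M_sub (hB : IsBrownianMotion P B) {T : ℝ} (hT : 0 < T) :
    Tendsto (fun t => ∫ ω, |M B t ω - M B T ω| ∂P) (𝓝 T) (𝓝 0) := by
  have hpos : ∀ᶠ t in 𝓝 T, 0 ≤ t := eventually_ge_nhds hT
  refine tendsto_integral_abs_sub_of_tendsto_integral (hpos.mono fun t => hB.integrable_M)
    (.of_forall fun t => ae_of_all _ fun ω => (Real.exp_pos _).le) (hB.integrable_M hT.le)
    (ae_of_all _ fun ω => (hB.continuous_M ω).tendsto T)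
    (tendsto_const_nhds.congr' (hpos.mono fun t ht => ?_))
  exact (hB.integral_M hT.le).trans (hB.integral_M ht).symm

theorem setIntegral_M (hB : IsBrownianMotion P B) (ν : ℝ) {T : ℝ} (hT : 0 ≤ T) {s : Set ℝ}
    (hs : MeasurableSet s) :
    ∫ ω in Adrift B ν T ⁻¹' s, M B T ω ∂P = P.real (Adrift B (ν + 1) T ⁻¹' s) := by
  have := hB.isProbabilityMeasure
  rw [Measure.real, ← (hB.identDistrib_Adrift ν 1 hT).measure_mem_eq hs,
    tilted_apply_eq_ofReal_integral, ENNReal.toReal_ofReal (by positivity)]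
  simp_rw [← hB.M_eq_exp_div_integral hT]

end ExponentialMartingale

section TimeIntegral

lemma measurable_Adrift (hB : IsBrownianMotion P B) (ν t : ℝ) : Measurable (Adrift B ν t) := by
  have := hB.measurable
  have := hB.continuous_paths
  refine (stronglyMeasurable_intervalIntegral ?_ 0 t).measurable
  exact stronglyMeasurable_uncurry_of_continuous_of_stronglyMeasurable (fun ω => by fun_prop)
    fun s => Measurable.stronglyMeasurable (by fun_prop)

lemma strictMono_Adrift (hB : IsBrownianMotion P B) {T : ℝ} (hT : 0 < T) (ω : Ω) :
    StrictMono fun ν => Adrift B ν T ω := by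
  intro ν ν' hν
  have := hB.continuous_paths
  have hlt : ∀ s ∈ Ioc 0 T,
      rexp (B s ω + (ν - 1 / 2) * s) < rexp (B s ω + (ν' - 1 / 2) * s) := fun s hs => by
    have := hs.1
    gcongr
  exact intervalIntegral.integral_lt_integral_of_continuousOn_of_le_of_exists_lt hT (by fun_prop)
    (by fun_prop) (fun s hs => (hlt s hs).le) ⟨T, right_mem_Icc.2 hT.le, hlt T ⟨hT, le_rfl⟩⟩

-- The events `{Adrift B ν T = k}` are disjoint for distinct `ν`, so all but countably many of them
-- are null; by Girsanov the laws of `Adrift B ν T` all have the same null sets.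
theorem ae_Adrift_ne (hB : IsBrownianMotion P B) (ν : ℝ) {T : ℝ} (hT : 0 < T) (k : ℝ) :
    ∀ᵐ ω ∂P, Adrift B ν T ω ≠ k := by
  have := hB.isProbabilityMeasure
  obtain ⟨θ, hθ⟩ := exists_measure_fiber_eq_zero (μ := P) (Y := fun θ => Adrift B (ν + θ) T)
    (fun θ => hB.measurable_Adrift _ T)
    (fun ω => (hB.strictMono_Adrift hT ω).injective.comp (add_right_injective ν)) k
  simp_rw [ae_iff, not_not]
  refine absolutelyContinuous_tilted (hB.integrable_exp_mul θ hT.le) ?_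
  exact ((hB.identDistrib_Adrift ν θ hT.le).measure_mem_eq (measurableSet_singleton k)).trans hθ

lemma integrable_A (hB : IsBrownianMotion P B) {t : ℝ} (ht : 0 ≤ t) : Integrable (A B t) P := by
  have := hB.isProbabilityMeasure
  have hpos : ∀ s ∈ Ι 0 t, 0 ≤ s := fun s hs => by
    rw [uIoc_of_le ht] at hs
    exact hs.1.le
  have hnorm : ∀ s ω, ‖M B s ω‖ = M B s ω := fun s ω => Real.norm_of_nonneg (Real.exp_pos _).le
  refine integrable_intervalIntegral_of_integral_norm_le (C := 1) hB.stronglyMeasurable_uncurry_M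
    (fun s hs => hB.integrable_M (hpos s hs)) fun s hs => ?_
  simp_rw [hnorm]
  exact (hB.integral_M (hpos s hs)).le

theorem isLittleO_integral_abs_A_sub (hB : IsBrownianMotion P B) {T : ℝ} (hT : 0 < T) :
    (fun x => ∫ ω, |A B x ω - A B T ω - (x - T) * M B T ω| ∂P) =o[𝓝 T] fun x => x - T := by
  have := hB.isProbabilityMeasure
  have hadd : ∀ x ω, A B x ω - A B T ω = ∫ s in T..x, M B s ω := fun x ω =>
    intervalIntegral.integral_interval_sub_left ((hB.continuous_M ω).intervalIntegrable _ _)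
      ((hB.continuous_M ω).intervalIntegrable _ _)
  simp_rw [hadd]
  exact isLittleO_integral_norm_intervalIntegral_sub
    (fun s => (hB.measurable_M s).stronglyMeasurable) hB.continuous_M
    ((eventually_ge_nhds hT).mono fun s => hB.integrable_M) (hB.tendsto_integral_abs_M_sub hT)

theorem hasDerivAt_integral_posPart_A (hB : IsBrownianMotion P B) (c : ℝ) {T : ℝ} (hT : 0 < T) :
    HasDerivAt (fun t => ∫ ω, max (A B t ω - c * t) 0 ∂P)
      (P.real {ω | Adrift B 1 T ω > c * T} - c * P.real {ω | A B T ω > c * T}) T := by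
  have := hB.isProbabilityMeasure
  have hint : ∀ᶠ t in 𝓝 T, Integrable (fun ω => A B t ω - c * t) P :=
    (eventually_ge_nhds hT).mono fun t ht => (hB.integrable_A ht).sub (integrable_const _)
  have hMc : Integrable (fun ω => M B T ω - c) P := (hB.integrable_M hT.le).sub (integrable_const c)
  have hatom : ∀ᵐ ω ∂P, A B T ω - c * T ≠ 0 := by
    simp_rw [sub_ne_zero, A_eq_Adrift_zero]
    exact hB.ae_Adrift_ne 0 hT _
  convert hasDerivAt_integral_posPart hint hMc ?_ hatom using 1
  · have htilt := hB.setIntegral_M 0 hT.le (measurableSet_Ioi (a := c * T))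
    rw [zero_add, ← A_eq_Adrift_zero] at htilt
    simp_rw [sub_pos]
    rw [integral_sub (hB.integrable_M hT.le).integrableOn (integrable_const c).integrableOn,
      setIntegral_const, smul_eq_mul, mul_comm (P.real _) c]
    exact congrArg (· - _) htilt.symm
  · refine (hB.isLittleO_integral_abs_A_sub hT).congr_left fun x => ?_
    congr with ω
    ring_nf

end TimeIntegral

end IsBrownianMotion

lemma hasDerivAt_div_sq_mul_comp {f : ℝ → ℝ} {f' σ τ : ℝ} (hσ : σ ≠ 0)
    (hf : HasDerivAt f f' (σ ^ 2 * τ)) (a : ℝ) :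
    HasDerivAt (fun s => a / s ^ 2 * f (s ^ 2 * τ))
      (-(2 / σ) * (a / σ ^ 2 * f (σ ^ 2 * τ)) + 2 * a * τ / σ * f') σ := by
  have hsq : HasDerivAt (fun s : ℝ => s ^ 2) (2 * σ) σ := by simpa using hasDerivAt_pow 2 σ
  have hdiv : HasDerivAt (fun s : ℝ => a / s ^ 2) (-(a * (2 * σ)) / (σ ^ 2) ^ 2) σ := by
    simpa using (hasDerivAt_const σ a).fun_div hsq (pow_ne_zero 2 hσ)
  refine (hdiv.mul (hf.comp σ (hsq.mul_const τ))).congr_deriv ?_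
  simp only [Function.comp_apply]
  field_simp

theorem asian_call_vega (hB : IsBrownianMotion P B)
    (κ S₀ r τ σ : ℝ) (hκ : 0 < κ) (hS : 0 < S₀) (hτ : 0 < τ) (hσ : 0 < σ) :
    HasDerivAt
      (fun s => S₀ / (τ * s ^ 2) * Real.exp (-r * τ) *
        ∫ ω, max (A B (s ^ 2 * τ) ω - s ^ 2 * κ * τ / S₀) 0 ∂P)
      (-(2 / σ) * (S₀ / (τ * σ ^ 2) * Real.exp (-r * τ) *
          ∫ ω, max (A B (σ ^ 2 * τ) ω - σ ^ 2 * κ * τ / S₀) 0 ∂P)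
        + 2 * S₀ / σ * Real.exp (-r * τ) *
            (P {ω | Adrift B 1 (σ ^ 2 * τ) ω > σ ^ 2 * κ * τ / S₀}).toReal
        - 2 * κ / σ * Real.exp (-r * τ) *
            (P {ω | A B (σ ^ 2 * τ) ω > σ ^ 2 * κ * τ / S₀}).toReal) σ := by
  have hprice := hasDerivAt_div_sq_mul_comp hσ.ne'
    (hB.hasDerivAt_integral_posPart_A (κ / S₀) (by positivity : 0 < σ ^ 2 * τ))
    (S₀ / τ * rexp (-r * τ))
  have hstrike : ∀ s : ℝ, s ^ 2 * κ * τ / S₀ = κ / S₀ * (s ^ 2 * τ) := fun s => by ring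
  have hfactor : ∀ s : ℝ,
      S₀ / (τ * s ^ 2) * rexp (-r * τ) = S₀ / τ * rexp (-r * τ) / s ^ 2 := fun s => by ring
  simp_rw [hstrike, hfactor]
  refine hprice.congr_deriv ?_
  simp only [Measure.real]
  field_simp
  ring
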